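/- Half-space rotation lemma (Lemma 1): Let A be a real m×n matrix and b ∈ ℝᵐ such that the system A·x ≤ b is satisfiable, and let g, h ∈ ℝⁿ and g₀, h₀ ∈ ℝ. Suppose (i) it is NOT the case that every x ∈ ℝⁿ with A·x ≤ b satisfies hᵀx + h₀ > 0, and (ii) every x ∈ ℝⁿ with A·x ≤ b satisfies gᵀx + g₀ ≥ 0 or hᵀx + h₀ > 0. Then there exists a constant μ ≥ 0 such that every x ∈ ℝⁿ with A·x ≤ b satisfies (gᵀx + g₀) + μ·(hᵀx + h₀) ≥ 0. -/

import Mathlib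

open Matrix

theorem farkas_aux {V : Type*} [AddCommGroup V] [Module ℝ V] (m : ℕ) :
    ∀ (a : Fin m → V →ₗ[ℝ] ℝ) (c : V →ₗ[ℝ] ℝ),
      (∀ x, (∀ i, a i x ≤ 0) → c x ≤ 0) →
      ∃ l : Fin m → ℝ, (∀ i, 0 ≤ l i) ∧ ∀ x, c x = ∑ i, l i * a i x := by
  induction m with
  | zero =>
    intro a c H
    refine ⟨fun _ => 0, fun _ => le_rfl, fun x => ?_⟩
    have h1 := H x (fun i => i.elim0)
    have h2 := H (-x) (fun i => i.elim0)
    rw [map_neg] at h2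
    simp
    linarith
  | succ m ih =>
    intro a c H
    by_cases hc : ∀ x, (∀ i : Fin m, a i.succ x ≤ 0) → c x ≤ 0
    · obtain ⟨l, hl, e⟩ := ih (fun i => a i.succ) c hc
      refine ⟨Fin.cons 0 l, fun i => ?_, fun x => ?_⟩
      · refine Fin.cases ?_ (fun j => ?_) i
        · simp
        · simpa using hl j
      · rw [e x, Fin.sum_univ_succ]; simp
    · push Not at hc
      obtain ⟨z, hz, hcz⟩ := hc
      have hpos : 0 < a 0 z := by
        by_contra hn
        push Not at hn
        exact absurd (H z (fun i => Fin.cases hn hz i)) (not_le.mpr hcz)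
      obtain ⟨l, hl, e⟩ := ih
        (fun i => a i.succ - (a i.succ z / a 0 z) • a 0) (c - (c z / a 0 z) • a 0) (by
          intro x hx
          have key := H (x - (a 0 x / a 0 z) • z) (by
            intro i
            refine Fin.cases ?_ (fun j => ?_) i
            · simp [hpos.ne']
            · have := hx j
              simp only [LinearMap.sub_apply, LinearMap.smul_apply, smul_eq_mul, map_sub, map_smul] at this ⊢
              convert this using 2
              ring)
          simp only [LinearMap.sub_apply, LinearMap.smul_apply, smul_eq_mul, map_sub, map_smul] at key ⊢
          convert key using 2
          ring)
      refine ⟨Fin.cons (c z / a 0 z - ∑ i, l i * (a i.succ z / a 0 z)) l, fun i => ?_, fun x => ?_⟩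
      · refine Fin.cases ?_ (fun j => ?_) i
        · simp only [Fin.cons_zero]
          have h1 : ∑ i, l i * (a i.succ z / a 0 z) ≤ 0 :=
            Finset.sum_nonpos fun i _ => mul_nonpos_of_nonneg_of_nonpos (hl i)
              (div_nonpos_of_nonpos_of_nonneg (hz i) hpos.le)
          have h2 : 0 < c z / a 0 z := div_pos hcz hpos
          linarith
        · simpa using hl j
      · have := e x
        simp only [LinearMap.sub_apply, LinearMap.smul_apply, smul_eq_mul, mul_sub,
          Finset.sum_sub_distrib] at this
        rw [Fin.sum_univ_succ]
        simp only [Fin.cons_zero, Fin.cons_succ, sub_mul, Finset.sum_mul, mul_assoc]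
        linarith

/-- The homogenization of an affine functional. -/
def homog {n : ℕ} (u : Fin n → ℝ) (r : ℝ) : ((Fin n → ℝ) × ℝ) →ₗ[ℝ] ℝ where
  toFun p := u ⬝ᵥ p.1 + r * p.2
  map_add' p q := by simp [dotProduct_add]; ring
  map_smul' s p := by simp [dotProduct_smul]; ring

/-- Half-space rotation lemma (Lemma 1). -/
theorem halfspace_rotation {m n : ℕ}
    (A : Matrix (Fin m) (Fin n) ℝ) (b : Fin m → ℝ)
    (g h : Fin n → ℝ) (g₀ h₀ : ℝ)
    (hsat : ∃ x, A.mulVec x ≤ b)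
    (hnot : ¬ ∀ x, A.mulVec x ≤ b → h ⬝ᵥ x + h₀ > 0)
    (hdisj : ∀ x, A.mulVec x ≤ b → g ⬝ᵥ x + g₀ ≥ 0 ∨ h ⬝ᵥ x + h₀ > 0) :
    ∃ μ ≥ (0 : ℝ), ∀ x, A.mulVec x ≤ b →
      (g ⬝ᵥ x + g₀) + μ * (h ⬝ᵥ x + h₀) ≥ 0 := by
  have happ : ∀ (u : Fin n → ℝ) (r : ℝ) (p : (Fin n → ℝ) × ℝ),
    homog u r p = u ⬝ᵥ p.1 + r * p.2 := fun _ _ _ => rfl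
  push Not at hnot
  obtain ⟨x₀, hx₀, hh₀⟩ := hnot
  have D : ∀ x, (∀ i, A i ⬝ᵥ x ≤ b i) → h ⬝ᵥ x + h₀ ≤ 0 → 0 ≤ g ⬝ᵥ x + g₀ := by
    intro x h1 h2
    rcases hdisj x h1 with h3 | h3
    · exact h3
    · linarith
  have hA₀ : ∀ i, A i ⬝ᵥ x₀ ≤ b i := hx₀
  obtain ⟨l, hl, e⟩ := farkas_aux (m + 1 + 1)
    (Fin.cons (homog h h₀) (Fin.cons (homog 0 (-1)) (fun i => homog (A i) (-b i))))
    (-homog g g₀) (by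
      rintro ⟨x, t⟩ H
      have H0 := H 0
      have H1 := H (Fin.succ 0)
      have H2 := fun i : Fin m => H i.succ.succ
      simp only [Fin.cons_zero, Fin.cons_succ, happ, zero_dotProduct] at H0 H1 H2
      simp only [LinearMap.neg_apply, happ]
      have ht : 0 ≤ t := by linarith
      rcases ht.eq_or_lt with ht | ht
      · subst ht
        by_contra hn
        have hgx : g ⬝ᵥ x < 0 := by linarith
        have hs : ∀ s : ℝ, 0 ≤ s → 0 ≤ g ⬝ᵥ x₀ + s * (g ⬝ᵥ x) + g₀ := by
          intro s hs
          have := D (x₀ + s • x) (fun i => by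
            rw [dotProduct_add, dotProduct_smul, smul_eq_mul]
            nlinarith [H2 i, hA₀ i]) (by
            rw [dotProduct_add, dotProduct_smul, smul_eq_mul]
            nlinarith)
          rwa [dotProduct_add, dotProduct_smul, smul_eq_mul] at this
        have hg0 := D x₀ hA₀ hh₀
        have := hs ((g ⬝ᵥ x₀ + g₀ + 1) / (-(g ⬝ᵥ x)))
          (div_nonneg (by linarith) (by linarith))
        have e1 : (g ⬝ᵥ x₀ + g₀ + 1) / (-(g ⬝ᵥ x)) * (g ⬝ᵥ x) = -(g ⬝ᵥ x₀ + g₀ + 1) := by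
          have := hgx.ne
          field_simp
        linarith
      · have sc : ∀ (u : Fin n → ℝ) (r : ℝ), u ⬝ᵥ (t⁻¹ • x) + r = t⁻¹ * (u ⬝ᵥ x + r * t) := by
          intro u r
          rw [dotProduct_smul, smul_eq_mul]
          field_simp
        have ti : 0 < t⁻¹ := inv_pos.mpr ht
        have := D (t⁻¹ • x) (fun i => by
          have := sc (A i) (-b i)
          nlinarith [H2 i]) (by rw [sc]; nlinarith)
        rw [sc] at this
        have := nonneg_of_mul_nonneg_right this ti
        linarith)
  refine ⟨l 0, hl 0, fun x hx => ?_⟩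
  have ex := e (x, 1)
  rw [Fin.sum_univ_succ, Fin.sum_univ_succ] at ex
  simp only [Fin.cons_zero, Fin.cons_succ, happ, zero_dotProduct, LinearMap.neg_apply] at ex
  have hs : ∑ i : Fin m, l i.succ.succ * (A i ⬝ᵥ x + -b i * 1) ≤ 0 :=
    Finset.sum_nonpos fun i _ => mul_nonpos_of_nonneg_of_nonpos (hl _) (by
      have : A i ⬝ᵥ x ≤ b i := hx i
      linarith)
  have := hl (Fin.succ 0)
  simp only [mul_one] at ex hs
  linarith
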